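/- Let (G,T) be a bipartite graft, r ∈ V(G), and let K be a decapital distance component of (G,T) with respect to r, with root class S_K and root fragment S̃_K. Let 𝒜(K) be the family consisting of S̃_K together with all Kotzig–Lovász classes of (G,T) other than S_K that contain a vertex of A(K). Then for every S ∈ 𝒜(K) with S ≠ S̃_K, the factor-component C_S of (G,T) containing S satisfies V(C_S) ⊆ V(K). -/

import Mathlib

/-! Write `ν(X)` for the minimum size of an `X`-join, fix a vertex set `T₀`, and put
`g x = ν(T₀ ∆ {x})`. Two facts carry the proof.

*Exchange* (`exchange`): if `A` is a `T₀ ∆ {x} ∆ {y} ∆ {r}`-join and `B` is a `T₀ ∆ {z}`-join, then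
`A ∆ B` contains a path from `z` to one of `x`, `y`, `r`, and switching `A` and `B` along this path
preserves `|A| + |B|`. Together with the fact that `g` changes by exactly one along an edge of a
bipartite graph, this gives by induction on the length of a walk (`nu_triple_ge`): if `x` and `y` are
joined by a walk inside `{g ≤ J}`, then for every `r`
`ν(T₀ ∆ {x} ∆ {y} ∆ {r}) + 2 J ≥ g x + g y + g r`.

*Distances* (`distF_eq`): for a minimum join `F` of `(G, T)`, the `F`-distance between `r` and `x` is
`ν(T ∆ {r} ∆ {x}) - ν(T)`; so for `T₀ = T ∆ {r}` the function `g` is the distance from `r` up to a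
constant.

Consequently: two vertices of `A(K)` are at distance at least `0` from each other; two vertices in
the same factor-component are at distance at most `0` (`exists_walk_of_factorConnected`); and the
Kotzig–Lovász relation is transitive (`klRel_trans`). Now suppose that a class `S` meets `A(K)` in `s`
and its factor-component leaves `K`. It does so along an allowed edge, whose end `u` in `K`
lies in `A(K)` and in the root class `S_K`. As `s` and `u` are factor-connected, they are at
distance exactly `0`, so `s ∼ u` and `S = S_K`. -/


namespace TightCuts

open SimpleGraph

variable {V : Type*}

/-- `(G, T)` is a graft: every connected component of `G` contains an even
number of vertices of `T`. -/
def IsGraft (G : SimpleGraph V) (T : Set V) : Prop :=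
  ∀ c : G.ConnectedComponent, Even ((T ∩ {v | G.connectedComponentMk v = c}).ncard)

/-- `F` is a join of the graft `(G, T)`: a set of edges such that a vertex is
incident with an odd number of edges of `F` exactly when it lies in `T`. -/
def IsJoin (G : SimpleGraph V) (T : Set V) (F : Set (Sym2 V)) : Prop :=
  F ⊆ G.edgeSet ∧ ∀ v : V, (Odd ({e ∈ F | v ∈ e}).ncard ↔ v ∈ T)

/-- `ν(G, T)`: the minimum size of a join of `(G, T)`. -/
noncomputable def nu (G : SimpleGraph V) (T : Set V) : ℕ :=
  sInf {n | ∃ F : Set (Sym2 V), IsJoin G T F ∧ F.ncard = n}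

/-- `F` is a minimum join of `(G, T)`. -/
def IsMinJoin (G : SimpleGraph V) (T : Set V) (F : Set (Sym2 V)) : Prop :=
  IsJoin G T F ∧ F.ncard = nu G T

open Classical in
/-- The `F`-weight of an edge: `-1` if the edge lies in `F`, `+1` otherwise. -/
noncomputable def edgeWt (F : Set (Sym2 V)) (e : Sym2 V) : ℤ :=
  if e ∈ F then -1 else 1

/-- The `F`-weight of a walk: the sum of the `F`-weights of its edges. -/
noncomputable def walkWt (F : Set (Sym2 V)) {G : SimpleGraph V} {x y : V}
    (p : G.Walk x y) : ℤ :=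
  (p.edges.map (edgeWt F)).sum

/-- The `F`-distance between `x` and `y`: the minimum `F`-weight of a path
between `x` and `y`. -/
noncomputable def distF (G : SimpleGraph V) (F : Set (Sym2 V)) (x y : V) : ℤ :=
  sInf {n : ℤ | ∃ p : G.Walk x y, p.IsPath ∧ walkWt F p = n}

/-- `K` is (the vertex set of) a connected component of the subgraph of `G`
induced by `U`. -/
def IsComponentOf (G : SimpleGraph V) (U K : Set V) : Prop :=
  K.Nonempty ∧ K ⊆ U ∧ (G.induce K).Connected ∧
    ∀ x ∈ K, ∀ y ∈ U, G.Adj x y → y ∈ K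

/-- `K` is a distance component of the graft with respect to root `r` at level `i`
(with respect to a minimum join `F`): `i` is attained as an `F`-distance from `r`,
and `K` is a connected component of the subgraph induced by the vertices at
`F`-distance at most `i` from `r`. -/
def IsDistCompAt (G : SimpleGraph V) (F : Set (Sym2 V)) (r : V) (i : ℤ) (K : Set V) : Prop :=
  (∃ x, distF G F r x = i) ∧ IsComponentOf G {x | distF G F r x ≤ i} K

/-- `K` is a decapital distance component with respect to root `r`: a distance
component (at some level) not containing `r`. -/
def IsDecapDistComp (G : SimpleGraph V) (F : Set (Sym2 V)) (r : V) (K : Set V) : Prop :=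
  ∃ i : ℤ, IsDistCompAt G F r i K ∧ r ∉ K

/-- The edge cut `δ_G(K)`: edges of `G` with exactly one end in `K`. -/
def cutEdges (G : SimpleGraph V) (K : Set V) : Set (Sym2 V) :=
  {e | e ∈ G.edgeSet ∧ ∃ x y, e = s(x, y) ∧ x ∈ K ∧ y ∉ K}

/-- An edge is allowed in `(G, T)` if some minimum join contains it. -/
def Allowed (G : SimpleGraph V) (T : Set V) (e : Sym2 V) : Prop :=
  ∃ F, IsMinJoin G T F ∧ e ∈ F

/-- Two vertices are factor-connected if there is a walk between them all of
whose edges are allowed. -/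
def FactorConnected (G : SimpleGraph V) (T : Set V) (u v : V) : Prop :=
  ∃ p : G.Walk u v, ∀ e ∈ p.edges, Allowed G T e

/-- `C` is (the vertex set of) a factor-component of `(G, T)`: an equivalence
class of factor-connectivity. -/
def IsFactorComponent (G : SimpleGraph V) (T : Set V) (C : Set V) : Prop :=
  ∃ v, C = {u | FactorConnected G T u v}

/-- The Kotzig–Lovász relation: `u ∼ v` iff `u = v`, or `u` and `v` are
factor-connected (hence in the same factor-component) and
`ν(G, T) = ν(G, T Δ {u, v})`. -/
def klRel (G : SimpleGraph V) (T : Set V) (u v : V) : Prop :=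
  u = v ∨ (FactorConnected G T u v ∧ nu G T = nu G (symmDiff T {u, v}))

/-- `S` is a Kotzig–Lovász class of `(G, T)`. -/
def IsKLClass (G : SimpleGraph V) (T : Set V) (S : Set V) : Prop :=
  ∃ v, S = {u | klRel G T u v}

/-- `A(K)` for a distance component `K` at level `i`: the vertices of `K` at
`F`-distance exactly `i` from `r`. -/
def AK (G : SimpleGraph V) (F : Set (Sym2 V)) (r : V) (i : ℤ) (K : Set V) : Set V :=
  K ∩ {x | distF G F r x = i}

/-- `D(K) = V(K) \ A(K)`. -/
def DK (G : SimpleGraph V) (F : Set (Sym2 V)) (r : V) (i : ℤ) (K : Set V) : Set V :=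
  K \ AK G F r i K

/-- `S` is the root class of `K`: a Kotzig–Lovász class containing all ends in
`K` of allowed edges of the cut `δ_G(K)`. -/
def IsRootClass (G : SimpleGraph V) (T : Set V) (K S : Set V) : Prop :=
  IsKLClass G T S ∧ ∀ e ∈ cutEdges G K, Allowed G T e → ∀ u ∈ e, u ∈ K → u ∈ S

/-- `S` is the antiroot class of `K`: a Kotzig–Lovász class containing all ends
outside `K` of allowed edges of the cut `δ_G(K)`. -/
def IsAntirootClass (G : SimpleGraph V) (T : Set V) (K S : Set V) : Prop :=
  IsKLClass G T S ∧ ∀ e ∈ cutEdges G K, Allowed G T e → ∀ u ∈ e, u ∉ K → u ∈ S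

/-- The family `𝒜(K)`: the root fragment `K ∩ S_K` together with all
Kotzig–Lovász classes other than `S_K` that contain a vertex of `A(K)`. -/
def famA (G : SimpleGraph V) (T : Set V) (F : Set (Sym2 V)) (r : V) (i : ℤ)
    (K S_K : Set V) : Set (Set V) :=
  insert (K ∩ S_K) {S | IsKLClass G T S ∧ S ≠ S_K ∧ (S ∩ AK G F r i K).Nonempty}

/-- `L` is adjacent to a vertex of `S` by an allowed edge. -/
def AdjAllowed (G : SimpleGraph V) (T : Set V) (L S : Set V) : Prop :=
  ∃ x ∈ L, ∃ s ∈ S, G.Adj x s ∧ Allowed G T s(x, s)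

/-- `𝒩_K(S)`: the family of connected components of `G[D(K)]` adjacent to a
vertex of `S` by an allowed edge. -/
def NKfam (G : SimpleGraph V) (T : Set V) (F : Set (Sym2 V)) (r : V) (i : ℤ)
    (K S : Set V) : Set (Set V) :=
  {L | IsComponentOf G (DK G F r i K) L ∧ AdjAllowed G T L S}

/-- `U_K(S)`: the union of the vertex sets of the members of `𝒩_K(S)`. -/
def UK (G : SimpleGraph V) (T : Set V) (F : Set (Sym2 V)) (r : V) (i : ℤ)
    (K S : Set V) : Set V :=
  ⋃₀ NKfam G T F r i K S

/-- `X` is an `F`-negative set for `S`: `X` is disjoint from `S` and every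
`x ∈ X` admits a path of negative `F`-weight from `x` to a vertex of `S` whose
vertices, except the end in `S`, all lie in `X`. -/
def IsNegSet (G : SimpleGraph V) (F : Set (Sym2 V)) (S X : Set V) : Prop :=
  X ⊆ Sᶜ ∧ ∀ x ∈ X, ∃ y ∈ S, ∃ p : G.Walk x y, p.IsPath ∧ walkWt F p < 0 ∧
    ∀ v ∈ p.support, v ≠ y → v ∈ X

/-- The maximum `F`-negative set for `S`: the union of all `F`-negative sets
for `S`. -/
def maxNegSet (G : SimpleGraph V) (F : Set (Sym2 V)) (S : Set V) : Set V :=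
  ⋃₀ {X | IsNegSet G F S X}

/-- The maximum `F`-negative set for `S` avoiding `Y`. -/
def maxNegSetAvoiding (G : SimpleGraph V) (F : Set (Sym2 V)) (S Y : Set V) : Set V :=
  ⋃₀ {X | IsNegSet G F S X ∧ Disjoint X Y}

/-! ### Joins and their symmetric differences -/

section Helpers

set_option linter.unusedSectionVars false

variable [Fintype V] {G : SimpleGraph V}

lemma odd_ncard_symmDiff {α : Type*} [Finite α] (A B : Set α) :
    Odd (symmDiff A B).ncard ↔ ¬ (Odd A.ncard ↔ Odd B.ncard) := by
  have h1 : (symmDiff A B).ncard = (A \ B).ncard + (B \ A).ncard := by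
    rw [Set.symmDiff_def, Set.ncard_union_eq _ (Set.toFinite _) (Set.toFinite _)]
    exact disjoint_sdiff_sdiff
  have h2 := Set.ncard_inter_add_ncard_sdiff_eq_ncard A B (Set.toFinite _)
  have h3 := Set.ncard_inter_add_ncard_sdiff_eq_ncard B A (Set.toFinite _)
  rw [Set.inter_comm] at h3
  simp only [Nat.odd_iff]
  omega

lemma IsJoin.toggle {T T' : Set V} {A B : Set (Sym2 V)}
    (hA : IsJoin G T A) (hB : IsJoin G T' B) :
    IsJoin G (symmDiff T T') (symmDiff A B) := by
  refine ⟨fun e he => ?_, fun v => ?_⟩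
  · rcases he with he | he
    · exact hA.1 he.1
    · exact hB.1 he.1
  · have : {e ∈ symmDiff A B | v ∈ e} = symmDiff {e ∈ A | v ∈ e} {e ∈ B | v ∈ e} := by
      ext e; simp only [Set.mem_symmDiff, Set.mem_ofPred_eq]; tauto
    rw [this, odd_ncard_symmDiff, hA.2 v, hB.2 v, Set.mem_symmDiff]
    tauto

lemma isJoin_empty : IsJoin G (∅ : Set V) ∅ := by
  refine ⟨Set.empty_subset _, fun v => ?_⟩
  simp

lemma isJoin_edge {u v : V} (h : G.Adj u v) :
    IsJoin G (symmDiff {u} {v}) {s(u, v)} := by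
  have huv := h.ne
  refine ⟨by simpa using h, fun w => ?_⟩
  by_cases hw : w ∈ s(u, v)
  · have : {e ∈ ({s(u, v)} : Set (Sym2 V)) | w ∈ e} = {s(u, v)} := by
      ext e
      simp only [Set.mem_ofPred_eq, Set.mem_singleton_iff]
      exact ⟨fun h => h.1, fun h => ⟨h, h ▸ hw⟩⟩
    rw [this, Set.ncard_singleton]
    simp only [Sym2.mem_iff] at hw
    simp only [odd_one, Set.mem_symmDiff, Set.mem_singleton_iff, true_iff]
    rcases hw with rfl | rfl
    · exact Or.inl ⟨rfl, huv⟩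
    · exact Or.inr ⟨rfl, huv.symm⟩
  · have : {e ∈ ({s(u, v)} : Set (Sym2 V)) | w ∈ e} = ∅ := by
      ext e
      simp only [Set.mem_ofPred_eq, Set.mem_singleton_iff, Set.mem_empty_iff_false, iff_false]
      rintro ⟨rfl, h⟩
      exact hw h
    rw [this, Set.ncard_empty]
    simp only [Sym2.mem_iff, not_or] at hw
    simp [Set.mem_symmDiff, hw.1, hw.2]

lemma isJoin_path {x y : V} (p : G.Walk x y) (hp : p.IsPath) :
    IsJoin G (symmDiff {x} {y}) {e | e ∈ p.edges} := by
  induction p with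
  | nil => simpa using isJoin_empty
  | @cons u v w h q ih =>
    have hq := (Walk.cons_isPath_iff h q).1 hp
    have hne : s(u, v) ∉ q.edges := fun hm => hq.2 (q.fst_mem_support_of_mem_edges hm)
    have := (isJoin_edge h).toggle (ih hq.1)
    convert this using 1
    · ext a; simp only [Set.mem_symmDiff, Set.mem_singleton_iff]; grind
    · ext e
      simp only [Walk.edges_cons, List.mem_cons, Set.mem_ofPred_eq, Set.mem_symmDiff,
        Set.mem_singleton_iff]
      constructor
      · rintro (rfl | he)
        · exact Or.inl ⟨rfl, hne⟩
        · exact Or.inr ⟨he, fun h => hne (h ▸ he)⟩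
      · tauto

/-- From every vertex `z` of `T`, a `T`-join contains a path to another vertex of `T`. -/
lemma IsJoin.exists_path {T : Set V} {A : Set (Sym2 V)} (hA : IsJoin G T A) {z : V} (hz : z ∈ T) :
    ∃ y ∈ T, y ≠ z ∧ ∃ p : G.Walk z y, p.IsPath ∧ ∀ e ∈ p.edges, e ∈ A := by
  classical
  suffices H : ∃ y ∈ T, y ≠ z ∧ ∃ p : G.Walk z y, ∀ e ∈ p.edges, e ∈ A by
    obtain ⟨y, hy, hne, p, hp⟩ := H
    exact ⟨y, hy, hne, p.bypass, p.bypass_isPath, fun e he => hp e (p.edges_bypass_subset_edges he)⟩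
  induction hn : A.ncard using Nat.strong_induction_on generalizing A T z with
  | _ n ih =>
    have hpos : 0 < ({e ∈ A | z ∈ e}).ncard := ((hA.2 z).2 hz).pos
    obtain ⟨e, heA, hze⟩ := (Set.ncard_pos (Set.toFinite _)).1 hpos
    obtain ⟨z', rfl⟩ := Sym2.mem_iff_exists.1 hze
    have hadj : G.Adj z z' := hA.1 heA
    by_cases hz' : z' ∈ T
    · exact ⟨z', hz', hadj.ne', hadj.toWalk, by simpa using heA⟩
    · have hA' := hA.toggle (isJoin_edge hadj)
      have hsub : symmDiff A {s(z, z')} = A \ {s(z, z')} := by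
        ext e
        simp only [Set.mem_symmDiff, Set.mem_singleton_iff, Set.mem_sdiff]
        constructor
        · rintro (h | ⟨rfl, h⟩)
          · exact h
          · exact absurd heA h
        · exact Or.inl
      rw [hsub] at hA'
      have hlt : (A \ {s(z, z')}).ncard < n := by
        rw [← hn]
        exact Set.ncard_sdiff_singleton_lt_of_mem heA (Set.toFinite _)
      obtain ⟨y, hy, hne, p, hp⟩ := ih _ hlt hA' (z := z')
        (by simp [Set.mem_symmDiff, hz', hadj.ne']) rfl
      have hyz : y ≠ z := by
        rintro rfl
        simp [Set.mem_symmDiff, hz, hadj.ne] at hy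
      refine ⟨y, ?_, hyz, Walk.cons hadj p, ?_⟩
      · simpa [Set.mem_symmDiff, hyz, hne] using hy
      · intro e he
        rcases List.mem_cons.1 (by simpa using he) with rfl | he
        · exact heA
        · exact (hp e he).1

lemma ncard_switch {α : Type*} [Finite α] {A B P : Set α} (hP : P ⊆ symmDiff A B) :
    (symmDiff A P).ncard + (symmDiff B P).ncard = A.ncard + B.ncard := by
  have hu : symmDiff A P ∪ symmDiff B P = A ∪ B := by
    ext e
    have := @hP e
    simp only [Set.mem_symmDiff, Set.mem_union] at *
    tauto
  have hi : symmDiff A P ∩ symmDiff B P = A ∩ B := by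
    ext e
    have := @hP e
    simp only [Set.mem_symmDiff, Set.mem_inter_iff] at *
    tauto
  rw [← Set.ncard_union_add_ncard_inter A B (Set.toFinite _) (Set.toFinite _), ← hu, ← hi,
    Set.ncard_union_add_ncard_inter _ _ (Set.toFinite _) (Set.toFinite _)]

lemma nu_le {T : Set V} {A : Set (Sym2 V)} (hA : IsJoin G T A) : nu G T ≤ A.ncard :=
  Nat.sInf_le ⟨A, hA, rfl⟩

lemma exists_minJoin {T : Set V} (h : ∃ A, IsJoin G T A) : ∃ A, IsMinJoin G T A := by
  obtain ⟨A, hA⟩ := h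
  exact Nat.sInf_mem (s := {n | ∃ F : Set (Sym2 V), IsJoin G T F ∧ F.ncard = n}) ⟨_, A, hA, rfl⟩

lemma exists_join_adj {T : Set V} {x y : V} (hxy : G.Adj x y)
    (hx : ∃ A, IsJoin G (symmDiff T {x}) A) : ∃ A, IsJoin G (symmDiff T {y}) A := by
  obtain ⟨A, hA⟩ := hx
  refine ⟨symmDiff A {s(x, y)}, ?_⟩
  convert hA.toggle (isJoin_edge hxy) using 1
  ext a; simp only [Set.mem_symmDiff, Set.mem_singleton_iff]; grind

lemma exists_join_walk {T : Set V} {x y : V} (p : G.Walk x y)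
    (hx : ∃ A, IsJoin G (symmDiff T {x}) A) : ∃ A, IsJoin G (symmDiff T {y}) A := by
  induction p with
  | nil => exact hx
  | cons h q ih => exact ih (exists_join_adj h hx)

lemma nu_adj_le {T : Set V} {x y : V} (hxy : G.Adj x y)
    (hx : ∃ A, IsJoin G (symmDiff T {x}) A) :
    nu G (symmDiff T {y}) ≤ nu G (symmDiff T {x}) + 1 := by
  obtain ⟨A, hA, hc⟩ := exists_minJoin hx
  have hJ : IsJoin G (symmDiff T {y}) (symmDiff A {s(x, y)}) := by
    convert hA.toggle (isJoin_edge hxy) using 1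
    ext a; simp only [Set.mem_symmDiff, Set.mem_singleton_iff]; grind
  have h1 := nu_le hJ
  have h2 : (symmDiff A {s(x, y)}).ncard ≤ A.ncard + 1 := by
    have : symmDiff A {s(x, y)} ⊆ insert s(x, y) A := by
      intro e he
      rcases he with he | he
      · exact Or.inr he.1
      · exact Or.inl he.1
    exact (Set.ncard_le_ncard this (Set.toFinite _)).trans (Set.ncard_insert_le _ _)
  omega

/-! ### Parity in bipartite graphs -/

/-- In a bipartite graph every edge has one end in each colour class, so a set of edges with all
degrees even has even size. -/
lemma even_of_isJoin_empty (hbip : G.Colorable 2) {A : Set (Sym2 V)}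
    (hA : IsJoin G (∅ : Set V) A) : Even A.ncard := by
  classical
  obtain ⟨c⟩ := hbip
  have h := Finset.sum_card_bipartiteAbove_eq_sum_card_bipartiteBelow
    (s := Finset.univ.filter (fun v : V => c v = 0)) (t := A.toFinset)
    (fun v e => v ∈ e)
  have hR : ∀ e ∈ A.toFinset, (Finset.bipartiteBelow (fun (v : V) (e : Sym2 V) => v ∈ e)
      (Finset.univ.filter (fun v : V => c v = 0)) e).card = 1 := by
    intro e he
    have heG := hA.1 (Set.mem_toFinset.1 he)
    induction e with
    | _ u v =>
      have hc : c u ≠ c v := c.valid heG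
      rw [Finset.card_eq_one]
      by_cases hu : c u = 0
      · refine ⟨u, ?_⟩
        ext w
        simp only [Finset.mem_bipartiteBelow, Finset.mem_filter, Finset.mem_univ, true_and,
          Sym2.mem_iff, Finset.mem_singleton]
        constructor
        · rintro ⟨h0, rfl | rfl⟩
          · rfl
          · exact absurd (hu.trans h0.symm) hc
        · rintro rfl; exact ⟨hu, Or.inl rfl⟩
      · have hv : c v = 0 := by omega
        refine ⟨v, ?_⟩
        ext w
        simp only [Finset.mem_bipartiteBelow, Finset.mem_filter, Finset.mem_univ, true_and,
          Sym2.mem_iff, Finset.mem_singleton]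
        constructor
        · rintro ⟨h0, rfl | rfl⟩
          · exact absurd h0 hu
          · rfl
        · rintro rfl; exact ⟨hv, Or.inr rfl⟩
  rw [Finset.sum_congr rfl hR, Finset.sum_const, smul_eq_mul, mul_one] at h
  rw [Set.ncard_eq_toFinset_card', ← h]
  refine Finset.even_sum _ fun v _ => ?_
  have hv := hA.2 v
  simp only [Set.mem_empty_iff_false, iff_false, Nat.not_odd_iff_even] at hv
  have e : Finset.bipartiteAbove (fun (v : V) (e : Sym2 V) => v ∈ e) A.toFinset v
      = {e ∈ A | v ∈ e}.toFinset := by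
    ext e
    simp [Finset.mem_bipartiteAbove]
  rwa [e, ← Set.ncard_eq_toFinset_card']

lemma nu_adj_ne (hbip : G.Colorable 2) {T : Set V} {x y : V} (hxy : G.Adj x y)
    (hx : ∃ A, IsJoin G (symmDiff T {x}) A) :
    nu G (symmDiff T {y}) ≠ nu G (symmDiff T {x}) := by
  intro heq
  obtain ⟨A, hA, hAc⟩ := exists_minJoin hx
  obtain ⟨B, hB, hBc⟩ := exists_minJoin (exists_join_adj hxy hx)
  have hJ : IsJoin G (∅ : Set V) (symmDiff (symmDiff A B) {s(x, y)}) := by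
    convert (hA.toggle hB).toggle (isJoin_edge hxy) using 1
    ext a
    simp only [Set.mem_symmDiff, Set.mem_singleton_iff, Set.mem_empty_iff_false, false_iff]
    grind
  have h := even_of_isJoin_empty hbip hJ
  rw [← Nat.not_odd_iff_even, odd_ncard_symmDiff, odd_ncard_symmDiff, hAc, hBc, heq,
    Set.ncard_singleton] at h
  simp at h

/-! ### The exchange property and the key inequality -/

/-- The size of a minimum join satisfies an exchange inequality: one of `x`, `y`, `r` can be
swapped with `z`. -/
lemma exchange {T : Set V} {x y r z : V}
    (hx : ∃ A, IsJoin G (symmDiff T {x}) A) (hy : ∃ A, IsJoin G (symmDiff T {y}) A)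
    (hr : ∃ A, IsJoin G (symmDiff T {r}) A) (hz : ∃ A, IsJoin G (symmDiff T {z}) A)
    (hzx : z ≠ x) (hzy : z ≠ y) (hzr : z ≠ r) :
    let f : V → V → V → ℕ := fun a b c => nu G (symmDiff (symmDiff (symmDiff T {a}) {b}) {c})
    let g : V → ℕ := fun a => nu G (symmDiff T {a})
    f z y r + g x ≤ f x y r + g z ∨ f x z r + g y ≤ f x y r + g z ∨
      f x y z + g r ≤ f x y r + g z := by
  intro f g
  obtain ⟨X, hX⟩ := hx
  obtain ⟨Y, hY⟩ := hy
  obtain ⟨R, hR⟩ := hr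
  have hXYR : ∃ A, IsJoin G (symmDiff (symmDiff (symmDiff T {x}) {y}) {r}) A := by
    refine ⟨symmDiff (symmDiff X Y) R, ?_⟩
    convert (hX.toggle hY).toggle hR using 1
    ext a; simp only [Set.mem_symmDiff, Set.mem_singleton_iff]; grind
  obtain ⟨A, hA, hAc⟩ := exists_minJoin hXYR
  obtain ⟨B, hB, hBc⟩ := exists_minJoin hz
  obtain ⟨w, hw, hwz, p, hp, hpe⟩ := (hA.toggle hB).exists_path (z := z) (by
    simp only [Set.mem_symmDiff, Set.mem_singleton_iff]; grind)
  have hP := isJoin_path p hp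
  have hsw := ncard_switch (A := A) (B := B) (P := {e | e ∈ p.edges}) hpe
  have hA' := nu_le (hA.toggle hP)
  have hB' := nu_le (hB.toggle hP)
  have e2 : symmDiff (symmDiff T {z}) (symmDiff {z} {w}) = symmDiff T {w} := by
    ext a; simp only [Set.mem_symmDiff, Set.mem_singleton_iff]; grind
  rw [e2] at hB'
  have hw' : w = x ∨ w = y ∨ w = r := by
    simp only [Set.mem_symmDiff, Set.mem_singleton_iff] at hw; tauto
  rcases hw' with rfl | rfl | rfl
  · left
    have e1 : symmDiff (symmDiff (symmDiff (symmDiff T {w}) {y}) {r}) (symmDiff {z} {w})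
        = symmDiff (symmDiff (symmDiff T {z}) {y}) {r} := by
      ext a; simp only [Set.mem_symmDiff, Set.mem_singleton_iff]; grind
    rw [e1] at hA'
    simp only [f, g]
    omega
  · right; left
    have e1 : symmDiff (symmDiff (symmDiff (symmDiff T {x}) {w}) {r}) (symmDiff {z} {w})
        = symmDiff (symmDiff (symmDiff T {x}) {z}) {r} := by
      ext a; simp only [Set.mem_symmDiff, Set.mem_singleton_iff]; grind
    rw [e1] at hA'
    simp only [f, g]
    omega
  · right; right
    have e1 : symmDiff (symmDiff (symmDiff (symmDiff T {x}) {y}) {w}) (symmDiff {z} {w})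
        = symmDiff (symmDiff (symmDiff T {x}) {y}) {z} := by
      ext a; simp only [Set.mem_symmDiff, Set.mem_singleton_iff]; grind
    rw [e1] at hA'
    simp only [f, g]
    omega

/-- The case of adjacent `x`, `z` of `nu_triple_ge`: toggling both ends of an edge changes the
minimum size by at most one, while the values at `x` and `z` differ, so that their sum is at most
`2 * J - 1`. -/
lemma nu_triple_adj (hbip : G.Colorable 2) {T : Set V} {x z r : V} (h : G.Adj x z) {J : ℤ}
    (hx : ∃ A, IsJoin G (symmDiff T {x}) A) (hr : ∃ A, IsJoin G (symmDiff T {r}) A)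
    (hxJ : (nu G (symmDiff T {x}) : ℤ) ≤ J) (hzJ : (nu G (symmDiff T {z}) : ℤ) ≤ J) :
    (nu G (symmDiff T {x}) : ℤ) + nu G (symmDiff T {z}) + nu G (symmDiff T {r}) ≤
      nu G (symmDiff (symmDiff (symmDiff T {x}) {z}) {r}) + 2 * J := by
  have hne := nu_adj_ne hbip h hx
  obtain ⟨R, hR⟩ := hr
  have e3 : symmDiff (symmDiff (symmDiff T {x}) {r}) {x} = symmDiff T {r} := by
    ext a; simp only [Set.mem_symmDiff, Set.mem_singleton_iff]; grind
  have e4 : symmDiff (symmDiff (symmDiff T {x}) {r}) {z}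
      = symmDiff (symmDiff (symmDiff T {x}) {z}) {r} := by
    ext a; simp only [Set.mem_symmDiff, Set.mem_singleton_iff]; grind
  have key := nu_adj_le (T := symmDiff (symmDiff T {x}) {r}) h.symm
    (exists_join_adj h (by rw [e3]; exact ⟨R, hR⟩))
  rw [e3, e4] at key
  omega

/-- If `x` and `y` are joined by a walk inside a level set `{v | ν(T ∆ {v}) ≤ J}`, then toggling
both of them in `T ∆ {r}` cannot lower the minimum size of a join by more than the sum of their
depths below `J`. -/
lemma nu_triple_ge (hbip : G.Colorable 2) {T : Set V} {x y r : V} {J : ℤ} (p : G.Walk x y)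
    (hp : ∀ v ∈ p.support, (nu G (symmDiff T {v}) : ℤ) ≤ J)
    (hx : ∃ A, IsJoin G (symmDiff T {x}) A) (hr : ∃ A, IsJoin G (symmDiff T {r}) A) :
    (nu G (symmDiff T {x}) : ℤ) + nu G (symmDiff T {y}) + nu G (symmDiff T {r}) ≤
      nu G (symmDiff (symmDiff (symmDiff T {x}) {y}) {r}) + 2 * J := by
  induction p with
  | @nil u =>
    have h := hp u (by simp)
    rw [symmDiff_symmDiff_cancel_right]
    omega
  | @cons x z y h q ih =>
    have hz := exists_join_adj h hx
    have hy := exists_join_walk q hz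
    have hxJ := hp x (by simp)
    have hzJ := hp z (by simp)
    have IH := ih (fun v hv => hp v (by simp [hv])) hz
    have hadj := fun r (hr : ∃ A, IsJoin G (symmDiff T {r}) A) =>
      nu_triple_adj hbip h hx hr hxJ hzJ
    have ey : symmDiff (symmDiff (symmDiff T {x}) {z}) {y}
        = symmDiff (symmDiff (symmDiff T {x}) {y}) {z} := by
      ext a; simp only [Set.mem_symmDiff, Set.mem_singleton_iff]; grind
    by_cases hzy : z = y
    · subst hzy; exact hadj r hr
    by_cases hzr : z = r
    · subst hzr
      have := hadj y hy
      rw [ey] at this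
      omega
    have h1 := hadj r hr
    have h2 := hadj y hy
    rw [ey] at h2
    have hex := exchange hx hy hr hz h.ne' hzy hzr
    dsimp only at hex
    rcases hex with h3 | h3 | h3 <;> omega

/-! ### Distances as differences of minimum join sizes -/

lemma walkWt_path (F : Set (Sym2 V)) {x y : V} (p : G.Walk x y) (hp : p.IsPath) :
    walkWt F p = (symmDiff F {e | e ∈ p.edges}).ncard - (F.ncard : ℤ) := by
  classical
  have h1 : walkWt F p = ∑ e ∈ p.edges.toFinset, edgeWt F e := by
    rw [List.sum_toFinset _ hp.isTrail.edges_nodup]; rfl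
  have h2 : ∑ e ∈ p.edges.toFinset, edgeWt F e
      = ((p.edges.toFinset.filter (· ∉ F)).card : ℤ) - (p.edges.toFinset.filter (· ∈ F)).card := by
    simp only [edgeWt, Finset.sum_ite, Finset.sum_const, nsmul_eq_mul]
    ring
  set P : Set (Sym2 V) := {e | e ∈ p.edges} with hP
  have h3 : (p.edges.toFinset.filter (· ∉ F)).card = (P \ F).ncard := by
    rw [← Set.ncard_coe_finset]; congr 1; ext e; simp [hP]
  have h4 : (p.edges.toFinset.filter (· ∈ F)).card = (F ∩ P).ncard := by
    rw [← Set.ncard_coe_finset]; congr 1; ext e; simp [hP, and_comm]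
  have h5 : (symmDiff F P).ncard = (F \ P).ncard + (P \ F).ncard := by
    rw [Set.symmDiff_def, Set.ncard_union_eq _ (Set.toFinite _) (Set.toFinite _)]
    exact disjoint_sdiff_sdiff
  have h6 := Set.ncard_inter_add_ncard_sdiff_eq_ncard F P (Set.toFinite _)
  rw [h1, h2, h3, h4]
  omega

lemma distF_eq {T : Set V} {F : Set (Sym2 V)} (hF : IsMinJoin G T F) {r x : V}
    (hrx : G.Reachable r x) :
    distF G F r x = (nu G (symmDiff (symmDiff T {r}) {x}) : ℤ) - nu G T := by
  apply IsLeast.csInf_eq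
  constructor
  · by_cases hne : x = r
    · subst hne
      exact ⟨Walk.nil, Walk.IsPath.nil, by
        rw [symmDiff_symmDiff_cancel_right]; simp [walkWt]⟩
    obtain ⟨q⟩ := hrx
    obtain ⟨B, hB, hBc⟩ := exists_minJoin (exists_join_walk (T := symmDiff T {r}) q
      ⟨F, by rw [symmDiff_symmDiff_cancel_right]; exact hF.1⟩)
    obtain ⟨w, hw, hwr, p, hp, hpe⟩ := (hF.1.toggle hB).exists_path (z := r) (by
      have := Ne.symm hne
      simp only [Set.mem_symmDiff, Set.mem_singleton_iff]; grind)
    obtain rfl : w = x := by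
      simp only [Set.mem_symmDiff, Set.mem_singleton_iff] at hw; tauto
    have hP := isJoin_path p hp
    have hsw := ncard_switch (A := F) (B := B) (P := {e | e ∈ p.edges}) hpe
    have h1 := nu_le (hF.1.toggle hP)
    have h2 := nu_le (hB.toggle hP)
    have e1 : symmDiff T (symmDiff {r} {w}) = symmDiff (symmDiff T {r}) {w} :=
      (symmDiff_assoc _ _ _).symm
    have e2 : symmDiff (symmDiff (symmDiff T {r}) {w}) (symmDiff {r} {w}) = T := by
      ext a; simp only [Set.mem_symmDiff, Set.mem_singleton_iff]; grind
    rw [e1] at h1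
    rw [e2] at h2
    have hFc := hF.2
    refine ⟨p, hp, ?_⟩
    rw [walkWt_path F p hp]
    omega
  · rintro n ⟨p, hp, rfl⟩
    have h1 := nu_le (hF.1.toggle (isJoin_path p hp))
    rw [← symmDiff_assoc] at h1
    rw [walkWt_path F p hp, hF.2]
    omega

lemma distF_eq_zero_of_not_reachable {F : Set (Sym2 V)} {r x : V} (h : ¬ G.Reachable r x) :
    distF G F r x = 0 := by
  have : {n : ℤ | ∃ p : G.Walk r x, p.IsPath ∧ walkWt F p = n} = ∅ := by
    ext n
    simp only [Set.mem_ofPred_eq, Set.mem_empty_iff_false, iff_false]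
    rintro ⟨p, -⟩
    exact h ⟨p⟩
  rw [distF, this]
  exact Int.csInf_empty

lemma distF_adj_le {T : Set V} {F : Set (Sym2 V)} (hF : IsMinJoin G T F) {r x y : V}
    (hxy : G.Adj x y) : distF G F r y ≤ distF G F r x + 1 := by
  by_cases hx : G.Reachable r x
  · rw [distF_eq hF hx, distF_eq hF (hx.trans hxy.reachable)]
    obtain ⟨q⟩ := hx
    have := nu_adj_le (T := symmDiff T {r}) hxy (exists_join_walk q
      ⟨F, by rw [symmDiff_symmDiff_cancel_right]; exact hF.1⟩)
    omega
  · rw [distF_eq_zero_of_not_reachable hx, distF_eq_zero_of_not_reachable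
      (fun hy => hx (hy.trans hxy.symm.reachable))]
    omega

/-! ### Factor-components and the Kotzig–Lovász relation -/

lemma nu_of_allowed {T : Set V} {x y : V} (h : Allowed G T s(x, y)) :
    nu G (symmDiff (symmDiff T {x}) {y}) + 1 ≤ nu G T := by
  obtain ⟨A, ⟨hA, hc⟩, he⟩ := h
  have hadj : G.Adj x y := hA.1 he
  have h1 := nu_le (hA.toggle (isJoin_edge hadj))
  rw [← symmDiff_assoc] at h1
  have h2 := ncard_switch (A := A) (B := ∅) (P := {s(x, y)}) (by
    simpa [symmDiff_def] using he)
  rw [Set.bot_eq_empty.symm, bot_symmDiff, Set.bot_eq_empty, Set.ncard_empty,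
    Set.ncard_singleton] at h2
  omega

/-- The vertices along an allowed walk from `r` are all at distance at most `0` from `r`. -/
lemma exists_walk_of_factorConnected (hbip : G.Colorable 2) {T : Set V}
    (hT : ∃ A, IsJoin G T A) {r y : V} (h : FactorConnected G T r y) :
    ∃ p : G.Walk r y, ∀ v ∈ p.support, nu G (symmDiff (symmDiff T {r}) {v}) ≤ nu G T := by
  have hr : ∃ A, IsJoin G (symmDiff (symmDiff T {r}) {r}) A := by
    rwa [symmDiff_symmDiff_cancel_right]
  suffices H : ∀ (a b : V) (q : G.Walk a b), (∀ e ∈ q.edges, Allowed G T e) →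
      (∃ p : G.Walk r a, ∀ v ∈ p.support, nu G (symmDiff (symmDiff T {r}) {v}) ≤ nu G T) →
      ∃ p : G.Walk r b, ∀ v ∈ p.support, nu G (symmDiff (symmDiff T {r}) {v}) ≤ nu G T by
    obtain ⟨q, hq⟩ := h
    exact H _ _ q hq ⟨Walk.nil, by simp [symmDiff_symmDiff_cancel_right]⟩
  intro a b q
  induction q with
  | nil => exact fun _ h => h
  | @cons a z b haz q ih =>
    rintro hq ⟨p, hp⟩
    refine ih (fun e he => hq e (by simp [he])) ⟨p.concat haz, fun v hv => ?_⟩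
    rw [Walk.support_concat] at hv
    rw [List.mem_append, List.mem_singleton] at hv
    rcases hv with hv | rfl
    · exact hp v hv
    have ha := exists_join_walk p hr
    have h1 := nu_triple_ge hbip (J := nu G T) p (fun v hv => by exact_mod_cast hp v hv) hr
      (exists_join_adj haz ha)
    have h2 := nu_of_allowed (hq s(a, v) (by simp))
    have h3 := nu_adj_le haz ha
    rw [symmDiff_symmDiff_cancel_right] at h1
    omega

lemma FactorConnected.symm {T : Set V} {x y : V} (h : FactorConnected G T x y) :
    FactorConnected G T y x := by
  obtain ⟨p, hp⟩ := h
  exact ⟨p.reverse, fun e he => hp e (by simpa using he)⟩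

lemma FactorConnected.trans {T : Set V} {x y z : V} (h : FactorConnected G T x y)
    (h' : FactorConnected G T y z) : FactorConnected G T x z := by
  obtain ⟨p, hp⟩ := h
  obtain ⟨q, hq⟩ := h'
  refine ⟨p.append q, fun e he => ?_⟩
  rw [Walk.edges_append, List.mem_append] at he
  exact he.elim (hp e) (hq e)

lemma klRel_iff {T : Set V} {x y : V} :
    klRel G T x y ↔
      FactorConnected G T x y ∧ nu G (symmDiff (symmDiff T {x}) {y}) = nu G T := by
  by_cases hxy : x = y
  · subst hxy
    rw [symmDiff_symmDiff_cancel_right]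
    exact ⟨fun _ => ⟨⟨Walk.nil, by simp⟩, rfl⟩, fun _ => Or.inl rfl⟩
  · have e : symmDiff T {x, y} = symmDiff (symmDiff T {x}) {y} := by
      rw [symmDiff_assoc]
      congr 1
      ext a
      simp only [Set.mem_insert_iff, Set.mem_symmDiff, Set.mem_singleton_iff]
      constructor
      · rintro (rfl | rfl)
        · exact Or.inl ⟨rfl, hxy⟩
        · exact Or.inr ⟨rfl, Ne.symm hxy⟩
      · tauto
    rw [klRel, e]
    constructor
    · rintro (h | ⟨h, h'⟩)
      · exact absurd h hxy
      · exact ⟨h, h'.symm⟩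
    · rintro ⟨h, h'⟩
      exact Or.inr ⟨h, h'.symm⟩

lemma klRel_symm {T : Set V} {x y : V} (h : klRel G T x y) : klRel G T y x := by
  rw [klRel_iff] at *
  exact ⟨h.1.symm, by rw [symmDiff_right_comm]; exact h.2⟩

/-- Seen from `y`, both `x` and `z` lie at level `0` and are joined by a walk of vertices of level
at most `0`. -/
lemma klRel_trans (hbip : G.Colorable 2) {T : Set V} (hT : ∃ A, IsJoin G T A) {x y z : V}
    (hxy : klRel G T x y) (hyz : klRel G T y z) : klRel G T x z := by
  have hyx := klRel_symm hxy
  rw [klRel_iff] at *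
  have hxz := hxy.1.trans hyz.1
  refine ⟨hxz, le_antisymm ?_ ?_⟩
  · obtain ⟨p, hp⟩ := exists_walk_of_factorConnected hbip hT hxz
    exact hp z p.end_mem_support
  · obtain ⟨p, hp⟩ := exists_walk_of_factorConnected hbip hT hyx.1
    obtain ⟨q, hq⟩ := exists_walk_of_factorConnected hbip hT hyz.1
    have hy : ∃ A, IsJoin G (symmDiff (symmDiff T {y}) {y}) A := by
      rwa [symmDiff_symmDiff_cancel_right]
    have h1 := nu_triple_ge hbip (T := symmDiff T {y}) (r := y) (J := nu G T)
      (p.reverse.append q) (fun v hv => by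
        rw [Walk.mem_support_append_iff, Walk.support_reverse, List.mem_reverse] at hv
        exact_mod_cast hv.elim (hp v) (hq v)) (exists_join_walk p hy) hy
    have e : symmDiff (symmDiff (symmDiff (symmDiff T {y}) {x}) {z}) {y}
        = symmDiff (symmDiff T {x}) {z} := by
      ext a; simp only [Set.mem_symmDiff, Set.mem_singleton_iff]; grind
    rw [e, symmDiff_symmDiff_cancel_right] at h1
    have h2 := hyx.2
    have h3 := hyz.2
    omega

end Helpers

/-! ### Factor-components meeting `A(K)` outside the root class -/

/-- For a bipartite graft `(G, T)` and a decapital distance component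
`K` (at level `i`) w.r.t. `r`, with root class `S_K` and root fragment `K ∩ S_K`:
every member `S` of `𝒜(K)` other than the root fragment has its factor-component
contained in `K`. -/
theorem stmt_14 {V : Type*} [Fintype V] [DecidableEq V]
    (G : SimpleGraph V) (T : Set V) (hbip : G.Colorable 2) (hgraft : IsGraft G T)
    (F : Set (Sym2 V)) (hF : IsMinJoin G T F)
    (r : V) (i : ℤ) (K : Set V)
    (hK : IsDistCompAt G F r i K) (hdecap : r ∉ K)
    (S_K : Set V) (hSK : IsRootClass G T K S_K) :
    ∀ S ∈ famA G T F r i K S_K, S ≠ K ∩ S_K →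
      ∀ C : Set V, IsFactorComponent G T C → S ⊆ C → C ⊆ K := by
  rintro S hS hne C ⟨c, rfl⟩ hSC
  have hT : ∃ A, IsJoin G T A := ⟨F, hF.1⟩
  rcases hS with rfl | ⟨⟨w, rfl⟩, hSne, s, hsw, hsK, hsi⟩
  · exact absurd rfl hne
  obtain ⟨-, -, hKsub, hKconn, hKmax⟩ := hK
  obtain ⟨⟨v₀, rfl⟩, hroot⟩ := hSK
  simp only [Set.mem_ofPred_eq] at hsw hsi
  by_contra hCK
  obtain ⟨t, htC, htK⟩ := Set.not_subset.1 hCK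
  have hsc : FactorConnected G T s c := hSC hsw
  obtain ⟨p, hp⟩ := hsc.trans (FactorConnected.symm htC)
  -- an allowed edge `u v` of the cut of `K`, with `u` factor-connected to `s`
  obtain ⟨u, v, hsu, huK, hvK, hadj, hall⟩ : ∃ u v, FactorConnected G T s u ∧ u ∈ K ∧ v ∉ K ∧
      G.Adj u v ∧ Allowed G T s(u, v) := by
    clear hsw hsi hsc hSC
    induction p with
    | nil => exact absurd hsK htK
    | @cons a b d h q ih =>
      by_cases hb : b ∈ K
      · obtain ⟨u, v, h1, h2⟩ := ih hb htC htK (fun e he => hp e (by simp [he]))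
        refine ⟨u, v, FactorConnected.trans ⟨h.toWalk, ?_⟩ h1, h2⟩
        intro e he
        exact hp e (by simp only [Walk.edges_cons, List.mem_cons]; left; simpa using he)
      · exact ⟨a, b, ⟨Walk.nil, by simp⟩, hsK, hb, h, hp _ (by simp)⟩
  have huv₀ : klRel G T u v₀ :=
    hroot s(u, v) ⟨hadj, u, v, rfl, huK, hvK⟩ hall u (by simp) huK
  have hui : distF G F r u ≤ i := hKsub huK
  have hvi : i < distF G F r v := by
    by_contra h
    exact hvK (hKmax u huK v (not_lt.1 h) hadj)
  have hui' : distF G F r u = i := by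
    have := distF_adj_le hF (r := r) hadj
    omega
  -- unreachable vertices all have the junk distance `0`, so the rise from `u` to `v` excludes them
  have hru : G.Reachable r u := by
    by_contra h
    have h1 := distF_eq_zero_of_not_reachable (F := F) h
    have h2 := distF_eq_zero_of_not_reachable (F := F)
      (fun hv : G.Reachable r v => h (hv.trans hadj.symm.reachable))
    omega
  obtain ⟨q, hq⟩ : ∃ q : G.Walk u s, ∀ x ∈ q.support, x ∈ K := by
    obtain ⟨q⟩ := hKconn.preconnected ⟨u, huK⟩ ⟨s, hsK⟩
    refine ⟨q.map (Embedding.induce K).toHom, fun x hx => ?_⟩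
    have hx := (Walk.support_map _ q) ▸ hx
    rw [List.mem_map] at hx
    obtain ⟨y, -, rfl⟩ := hx
    exact y.2
  have hreach : ∀ x ∈ q.support, G.Reachable r x :=
    fun x hx => by
      classical
      exact hru.trans (q.takeUntil x hx).reachable
  have hus : klRel G T u s := by
    rw [klRel_iff]
    refine ⟨hsu.symm, le_antisymm ?_ ?_⟩
    · obtain ⟨p', hp'⟩ := exists_walk_of_factorConnected hbip hT hsu.symm
      exact hp' s p'.end_mem_support
    · have hr : ∃ A, IsJoin G (symmDiff (symmDiff T {r}) {r}) A := by
        rwa [symmDiff_symmDiff_cancel_right]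
      have h1 := nu_triple_ge hbip (T := symmDiff T {r}) (r := r) (J := i + nu G T) q
        (fun x hx => by
          have h2 : distF G F r x ≤ i := hKsub (hq x hx)
          rw [distF_eq hF (hreach x hx)] at h2
          omega) (by obtain ⟨p'⟩ := hru; exact exists_join_walk p' hr) hr
      have e : symmDiff (symmDiff (symmDiff (symmDiff T {r}) {u}) {s}) {r}
          = symmDiff (symmDiff T {u}) {s} := by
        ext a; simp only [Set.mem_symmDiff, Set.mem_singleton_iff]; grind
      rw [e, symmDiff_symmDiff_cancel_right] at h1
      rw [distF_eq hF hru] at hui'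
      rw [distF_eq hF (hreach s q.end_mem_support)] at hsi
      omega
  have hwv₀ : klRel G T w v₀ :=
    klRel_trans hbip hT (klRel_symm hsw) (klRel_trans hbip hT (klRel_symm hus) huv₀)
  apply hSne
  ext x
  exact ⟨fun hx => klRel_trans hbip hT hx hwv₀,
    fun hx => klRel_trans hbip hT hx (klRel_symm hwv₀)⟩
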